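/- Let P ⊂ ℝ^d be a centrally symmetric d-dimensional polytope with n vertices. Then the number of edges of P satisfies f_1(P) ≤ (n²/2)·(1 − 2^{−d}). -/

import Mathlib

open Real

/-- A centrally symmetric polytope in `ℝ^d`: the convex hull of a finite set,
satisfying `P = -P`. -/
def IsCSPolytope {d : ℕ} (P : Set (EuclideanSpace ℝ (Fin d))) : Prop :=
  (∃ V : Finset (EuclideanSpace ℝ (Fin d)), P = convexHull ℝ (V : Set (EuclideanSpace ℝ (Fin d)))) ∧
  P = -P

/-- The number of `j`-dimensional faces of `P`, a face being the intersection of `P`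
with a supporting hyperplane, i.e. a nonempty exposed face. -/
noncomputable def faceCount {d : ℕ} (P : Set (EuclideanSpace ℝ (Fin d))) (j : ℕ) : ℕ :=
  Set.ncard {F : Set (EuclideanSpace ℝ (Fin d)) |
    IsExposed ℝ P F ∧ F.Nonempty ∧ Module.finrank ℝ (vectorSpan ℝ F) = j}

/-- `fmax d n j`: the maximum number of `j`-faces of a `d`-dimensional centrally
symmetric polytope in `ℝ^d` with exactly `n` vertices. -/
noncomputable def fmax (d n j : ℕ) : ℕ :=
  sSup {m : ℕ | ∃ P : Set (EuclideanSpace ℝ (Fin d)),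
    IsCSPolytope P ∧ affineSpan ℝ P = ⊤ ∧
    (Set.extremePoints ℝ P).ncard = n ∧ faceCount P j = m}

/-! For vertices `u`, `w` of `P`, the translates `u + int P` and `w + int P` both lie in
`2 int P`. If they meet, convexity and central symmetry put the midpoint of `u` and `-w` in the
interior of `P`, so `u` and `-w` do not span an edge if `d ≠ 1`. By Cauchy–Schwarz, `n` sets of
volume `vol P` inside a set of volume `2 ^ d vol P` have at least `n ^ 2 / 2 ^ d` intersecting
ordered pairs, and the map `(u, w) ↦ (u, -w)` turns these into as many ordered pairs of vertices
that span no edge. When `d = 1` the segment `P` is itself an edge whose relative interior meets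
`int P`, and the bound is checked directly. -/

open MeasureTheory Module Set
open scoped Finset Pointwise

section MeasureTheory

variable {α ι : Type*} [MeasurableSpace α] {μ : Measure α}

theorem sq_integral_le_measureReal_univ_mul_integral_sq [IsFiniteMeasure μ] {f : α → ℝ}
    (hf : MemLp f 2 μ) : (∫ x, f x ∂μ) ^ 2 ≤ μ.real univ * ∫ x, f x ^ 2 ∂μ := by
  rcases eq_zero_or_neZero μ with rfl | _
  · simp
  have hμ : 0 < μ.real univ := measureReal_univ_pos
  have jensen : (⨍ x, f x ∂μ) ^ 2 ≤ ⨍ x, f x ^ 2 ∂μ :=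
    even_two.convexOn_pow.map_average_le (continuous_pow 2).continuousOn isClosed_univ
      (by simp) (hf.integrable one_le_two) hf.integrable_sq
  rw [average_eq, average_eq, smul_eq_mul, smul_eq_mul] at jensen
  calc (∫ x, f x ∂μ) ^ 2
      = μ.real univ ^ 2 * ((μ.real univ)⁻¹ * ∫ x, f x ∂μ) ^ 2 := by field_simp
    _ ≤ μ.real univ ^ 2 * ((μ.real univ)⁻¹ * ∫ x, f x ^ 2 ∂μ) := by gcongr
    _ = μ.real univ * ∫ x, f x ^ 2 ∂μ := by field_simp

variable {s : Finset ι} {A : ι → Set α} {B : Set α}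

theorem sq_sum_measureReal_le_measureReal_mul_sum_measureReal_inter
    (hA : ∀ i ∈ s, MeasurableSet (A i)) (hAB : ∀ i ∈ s, A i ⊆ B) (hB : μ B ≠ ⊤) :
    (∑ i ∈ s, μ.real (A i)) ^ 2 ≤ μ.real B * ∑ p ∈ s ×ˢ s, μ.real (A p.1 ∩ A p.2) := by
  have : IsFiniteMeasure (μ.restrict B) := isFiniteMeasure_restrict.2 hB
  have integral_eq {S : Set α} (hS : MeasurableSet S) (hSB : S ⊆ B) :
      ∫ x in B, S.indicator 1 x ∂μ = μ.real S := by
    rw [integral_indicator_one hS, measureReal_restrict_apply hS, inter_eq_left.2 hSB]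
  have memLp {S : Set α} (hS : MeasurableSet S) (p : ENNReal) :
      MemLp (S.indicator (1 : α → ℝ)) p (μ.restrict B) := (memLp_const 1).indicator hS
  have hA_inter : ∀ p ∈ s ×ˢ s, MeasurableSet (A p.1 ∩ A p.2) := fun p hp ↦
    (hA _ (Finset.mem_product.1 hp).1).inter (hA _ (Finset.mem_product.1 hp).2)
  have sq_sum (x : α) : (∑ i ∈ s, (A i).indicator (1 : α → ℝ) x) ^ 2 =
      ∑ p ∈ s ×ˢ s, (A p.1 ∩ A p.2).indicator 1 x := by
    simp only [sq, Finset.sum_mul_sum, Finset.sum_product, inter_indicator_one, Pi.mul_apply]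
  have cauchySchwarz := sq_integral_le_measureReal_univ_mul_integral_sq
    (memLp_finsetSum s fun i hi ↦ memLp (hA i hi) 2)
  simp only [sq_sum, measureReal_restrict_apply_univ] at cauchySchwarz
  rwa [integral_finsetSum _ fun i hi ↦ memLp_one_iff_integrable.1 (memLp (hA i hi) 1),
    integral_finsetSum _ fun p hp ↦ memLp_one_iff_integrable.1 (memLp (hA_inter p hp) 1),
    Finset.sum_congr rfl fun i hi ↦ integral_eq (hA i hi) (hAB i hi),
    Finset.sum_congr rfl fun p hp ↦ integral_eq (hA_inter p hp)
      (inter_subset_left.trans (hAB _ (Finset.mem_product.1 hp).1))] at cauchySchwarz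

open scoped Classical in
theorem sq_card_mul_le_measureReal_mul_card_inter_nonempty {v : ℝ} (hv : 0 < v)
    (hA : ∀ i ∈ s, MeasurableSet (A i)) (hAv : ∀ i ∈ s, μ.real (A i) = v)
    (hAB : ∀ i ∈ s, A i ⊆ B) (hB : μ B ≠ ⊤) :
    (#s : ℝ) ^ 2 * v ≤ μ.real B * #{p ∈ s ×ˢ s | (A p.1 ∩ A p.2).Nonempty} := by
  have inter_le : ∀ p ∈ s ×ˢ s,
      μ.real (A p.1 ∩ A p.2) ≤ if (A p.1 ∩ A p.2).Nonempty then v else 0 := by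
    intro p hp
    have hp1 := (Finset.mem_product.1 hp).1
    split_ifs with h
    · exact hAv _ hp1 ▸ measureReal_mono inter_subset_left
        (measure_ne_top_of_subset (hAB _ hp1) hB)
    · simp [not_nonempty_iff_eq_empty.1 h]
  refine le_of_mul_le_mul_right ?_ hv
  calc (#s : ℝ) ^ 2 * v * v
      = (∑ i ∈ s, μ.real (A i)) ^ 2 := by
        rw [Finset.sum_congr rfl hAv, Finset.sum_const, nsmul_eq_mul]; ring
    _ ≤ μ.real B * ∑ p ∈ s ×ˢ s, μ.real (A p.1 ∩ A p.2) :=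
        sq_sum_measureReal_le_measureReal_mul_sum_measureReal_inter hA hAB hB
    _ ≤ μ.real B * ∑ p ∈ s ×ˢ s, if (A p.1 ∩ A p.2).Nonempty then v else 0 := by
        gcongr with p hp
        exact inter_le p hp
    _ = μ.real B * #{p ∈ s ×ˢ s | (A p.1 ∩ A p.2).Nonempty} * v := by
        rw [← Finset.sum_filter, Finset.sum_const, nsmul_eq_mul, mul_assoc]

end MeasureTheory

theorem two_mul_ncard_le_card_of_pairwise_inter_subsingleton {α : Type*} {S : Set (Set α)}
    {T : Finset (α × α)} (hS : S.Pairwise fun F G ↦ (F ∩ G).Subsingleton)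
    (hT : ∀ F ∈ S, ∃ u ∈ F, ∃ w ∈ F, u ≠ w ∧ (u, w) ∈ T ∧ (w, u) ∈ T) :
    2 * S.ncard ≤ #T := by
  classical
  have subsingleton (p : α × α) :
      {F ∈ S | p.1 ∈ F ∧ p.2 ∈ F ∧ p.1 ≠ p.2}.Subsingleton := by
    rintro F ⟨hF, h1F, h2F, hp⟩ G ⟨hG, h1G, h2G, -⟩
    exact hS.eq hF hG fun h ↦ hp (h ⟨h1F, h1G⟩ ⟨h2F, h2G⟩)
  have finite : S.Finite := by
    refine (T.finite_toSet.biUnion fun p _ ↦ (subsingleton p).finite).subset fun F hF ↦ ?_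
    obtain ⟨u, hu, w, hw, huw, huwT, -⟩ := hT F hF
    exact mem_biUnion huwT ⟨hF, hu, hw, huw⟩
  rw [ncard_eq_toFinset_card S finite, mul_comm, ← mul_one #T]
  refine Finset.card_mul_le_card_mul (fun F p ↦ p.1 ∈ F ∧ p.2 ∈ F ∧ p.1 ≠ p.2) ?_ ?_
  · intro F hF
    obtain ⟨u, hu, w, hw, huw, huwT, hwuT⟩ := hT F (finite.mem_toFinset.1 hF)
    refine Finset.one_lt_card.2 ⟨(u, w), ?_, (w, u), ?_, fun h ↦ huw congr(($h).1)⟩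
    · exact (Finset.mem_bipartiteAbove _).2 ⟨huwT, hu, hw, huw⟩
    · exact (Finset.mem_bipartiteAbove _).2 ⟨hwuT, hw, hu, huw.symm⟩
  · intro p _
    refine Finset.card_le_one_iff_subsingleton.2 ((subsingleton p).anti fun F hF ↦ ?_)
    rw [Finset.mem_coe, Finset.mem_bipartiteBelow, finite.mem_toFinset] at hF
    exact hF

section Translates

theorem neg_interior {G : Type*} [TopologicalSpace G] [InvolutiveNeg G] [ContinuousNeg G]
    (s : Set G) : -interior s = interior (-s) :=
  (Homeomorph.neg G).preimage_interior s

theorem neg_extremePoints {E : Type*} [AddCommGroup E] [Module ℝ E] (s : Set E) :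
    -extremePoints ℝ s = extremePoints ℝ (-s) := by
  rw [← image_neg_eq_neg, ← image_neg_eq_neg]
  exact image_extremePoints (𝕜 := ℝ) (LinearEquiv.neg ℝ : E ≃ₗ[ℝ] E) s

section TopologicalVectorSpace

variable {E : Type*} [AddCommGroup E] [Module ℝ E] [TopologicalSpace E] [IsTopologicalAddGroup E]
  [ContinuousConstSMul ℝ E] {P : Set E}

theorem vadd_interior_subset_two_smul_interior (hconv : Convex ℝ P) {u : E} (hu : u ∈ P) :
    u +ᵥ interior P ⊆ (2 : ℝ) • interior P := by
  rintro _ ⟨q, hq, rfl⟩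
  refine ⟨midpoint ℝ u q, ?_, by simp [midpoint_eq_smul_add]⟩
  rw [midpoint_eq_smul_add, smul_add]
  exact hconv.combo_self_interior_mem_interior hu hq (by norm_num) (by norm_num) (by norm_num)

theorem midpoint_neg_mem_interior_of_vadd_inter_nonempty (hconv : Convex ℝ P) (hneg : -P = P)
    {u w : E} (h : ((u +ᵥ interior P) ∩ (w +ᵥ interior P)).Nonempty) :
    midpoint ℝ u (-w) ∈ interior P := by
  obtain ⟨_, ⟨q, hq, rfl⟩, q', hq', huw : w + q' = u + q⟩ := h
  have hmid : midpoint ℝ u (-w) = midpoint ℝ q' (-q) := by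
    rw [midpoint_eq_smul_add, midpoint_eq_smul_add, ← sub_eq_add_neg, ← sub_eq_add_neg,
      sub_eq_sub_iff_add_eq_add.2 (by rw [← huw, add_comm])]
  rw [hmid]
  refine hconv.interior.midpoint_mem hq' ?_
  rwa [← Set.mem_neg, neg_interior, hneg]

end TopologicalVectorSpace

open scoped Classical in
theorem sq_card_le_two_pow_mul_card_midpoint_mem_interior {E : Type*} [NormedAddCommGroup E]
    [NormedSpace ℝ E] [FiniteDimensional ℝ E] {P : Set E} (hconv : Convex ℝ P)
    (hbdd : Bornology.IsBounded P) (hneg : -P = P) (hint : (interior P).Nonempty) {V : Finset E}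
    (hVP : ∀ u ∈ V, u ∈ P) (hV : ∀ u ∈ V, -u ∈ V) :
    #V ^ 2 ≤ 2 ^ finrank ℝ E * #{p ∈ V ×ˢ V | midpoint ℝ p.1 p.2 ∈ interior P} := by
  borelize E
  let μ : Measure E := Measure.addHaar
  have hfin : μ (interior P) ≠ ⊤ := (hbdd.subset interior_subset).measure_lt_top.ne
  have hpos : 0 < μ.real (interior P) :=
    ENNReal.toReal_pos (isOpen_interior.measure_pos μ hint).ne' hfin
  have hB : μ ((2 : ℝ) • interior P) ≠ ⊤ :=
    ((hbdd.subset interior_subset).smul₀ 2).measure_lt_top.ne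
  have volume_bound := sq_card_mul_le_measureReal_mul_card_inter_nonempty (s := V) hpos
    (fun u _ ↦ (isOpen_interior.vadd u).measurableSet)
    (fun u _ ↦ by rw [measureReal_def, measure_vadd, measureReal_def])
    (fun u hu ↦ vadd_interior_subset_two_smul_interior hconv (hVP u hu)) hB
  have scaling : μ.real ((2 : ℝ) • interior P) = 2 ^ finrank ℝ E * μ.real (interior P) := by
    simp [measureReal_def, Measure.addHaar_smul]
  rw [scaling, mul_right_comm] at volume_bound
  have card_bound := le_of_mul_le_mul_right volume_bound hpos
  refine (by exact_mod_cast card_bound : _ ≤ _).trans (Nat.mul_le_mul_left _ ?_)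
  refine Finset.card_le_card_of_injOn (fun p ↦ (p.1, -p.2)) (fun p hp ↦ ?_) fun p _ q _ h ↦ ?_
  · simp only [Finset.coe_filter, Finset.mem_product, mem_ofPred_eq] at hp ⊢
    exact ⟨⟨hp.1.1, hV _ hp.1.2⟩, midpoint_neg_mem_interior_of_vadd_inter_nonempty hconv hneg hp.2⟩
  · simpa [Prod.ext_iff] using h

end Translates

section Edges

variable {E : Type*} [AddCommGroup E] [Module ℝ E] [TopologicalSpace E] {P F G s : Set E}

/-- The edges of `P`: its nonempty exposed faces of dimension one. If `P` is itself
one-dimensional, then `P` counts as an edge, since the supporting functional may vanish. -/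
def edges (P : Set E) : Set (Set E) :=
  {F | IsExposed ℝ P F ∧ F.Nonempty ∧ finrank ℝ (vectorSpan ℝ F) = 1}

theorem inter_affineSpan_subset_of_isExposed (hG : IsExposed ℝ P G) (hsG : s ⊆ G)
    (hs : s.Nonempty) : P ∩ affineSpan ℝ s ⊆ G := by
  rintro x ⟨hxP, hxs⟩
  obtain ⟨a, ha⟩ := hs
  obtain ⟨l, rfl⟩ := hG ⟨a, hsG ha⟩
  have hl : EqOn l.toLinearMap.toAffineMap (AffineMap.const ℝ E (l a)) s := fun y hy ↦
    le_antisymm ((hsG ha).2 y (hsG hy).1) ((hsG hy).2 a (hsG ha).1)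
  have hlx : l x = l a := AffineMap.eqOn_affineSpan hl hxs
  exact ⟨hxP, fun y hy ↦ hlx ▸ (hsG ha).2 y hy⟩

theorem subset_of_collinear_of_isExposed (hs : Collinear ℝ s) (hsP : s ⊆ P)
    (hG : IsExposed ℝ P G) (hsG : (s ∩ G).Nontrivial) : s ⊆ G := by
  obtain ⟨u, ⟨hus, huG⟩, w, ⟨hws, hwG⟩, huw⟩ := hsG
  exact fun x hx ↦ inter_affineSpan_subset_of_isExposed hG (pair_subset huG hwG)
    (insert_nonempty u {w}) ⟨hsP hx, hs.mem_affineSpan_of_mem_of_ne hus hws hx huw⟩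

theorem collinear_of_mem_edges (hF : F ∈ edges P) : Collinear ℝ F :=
  have := FiniteDimensional.of_finrank_eq_succ hF.2.2
  collinear_iff_finrank_le_one.2 hF.2.2.le

theorem nontrivial_of_mem_edges (hF : F ∈ edges P) : F.Nontrivial := by
  rw [← not_subsingleton_iff, ← vectorSpan_eq_bot_iff_subsingleton ℝ]
  intro h
  have hrank := hF.2.2
  rw [h, finrank_bot] at hrank
  exact zero_ne_one hrank

theorem pairwise_edges_inter_subsingleton :
    (edges P).Pairwise fun F G ↦ (F ∩ G).Subsingleton := by
  intro F hF G hG hne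
  by_contra hnt
  rw [not_subsingleton_iff] at hnt
  exact hne <| Subset.antisymm
    (subset_of_collinear_of_isExposed (collinear_of_mem_edges hF) hF.1.subset hG.1 hnt)
    (subset_of_collinear_of_isExposed (collinear_of_mem_edges hG) hG.1.subset hF.1
      (inter_comm F G ▸ hnt))

theorem edges_subset_singleton_of_collinear (hP : Collinear ℝ P) : edges P ⊆ {P} := fun _ hF ↦
  hF.1.subset.antisymm <| subset_of_collinear_of_isExposed hP subset_rfl hF.1 <|
    (inter_eq_right.2 hF.1.subset).symm ▸ nontrivial_of_mem_edges hF

variable [IsTopologicalAddGroup E] [ContinuousSMul ℝ E]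

theorem disjoint_interior_of_isExposed_of_ne (hF : IsExposed ℝ P F) (hne : F ≠ P) :
    Disjoint F (interior P) := by
  refine disjoint_left.2 fun x hxF hx ↦ hne ?_
  obtain ⟨l, rfl⟩ := hF ⟨x, hxF⟩
  by_cases hl : l = 0
  · simp [hl]
  have hopen : IsOpen (l '' interior P) := l.isOpenMap_of_ne_zero hl _ isOpen_interior
  have hle : l '' interior P ⊆ Iic (l x) := by
    rintro _ ⟨y, hy, rfl⟩
    exact hxF.2 y (interior_subset hy)
  have hlt : l '' interior P ⊆ Iio (l x) :=
    interior_Iic (a := l x) ▸ hopen.subset_interior_iff.2 hle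
  exact (lt_irrefl (l x) (hlt (mem_image_of_mem l hx))).elim

variable [T2Space E] [LocallyConvexSpace ℝ E]

theorem nontrivial_extremePoints_of_isCompact (hF : IsCompact F) (hconv : Convex ℝ F)
    (hnt : F.Nontrivial) : (extremePoints ℝ F).Nontrivial := by
  rw [← not_subsingleton_iff] at hnt ⊢
  intro hsub
  rw [← closure_convexHull_extremePoints hF hconv] at hnt
  rcases hsub.eq_empty_or_singleton with h | ⟨a, h⟩ <;> simp [h] at hnt

theorem nontrivial_inter_extremePoints_of_mem_edges (hP : IsCompact P) (hconv : Convex ℝ P)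
    (hF : F ∈ edges P) : (F ∩ extremePoints ℝ P).Nontrivial := by
  rw [← hF.1.isExtreme.extremePoints_eq]
  exact nontrivial_extremePoints_of_isCompact (hF.1.isCompact hP) (hF.1.convex hconv)
    (nontrivial_of_mem_edges hF)

theorem four_mul_ncard_edges_le_of_collinear (hcol : Collinear ℝ P) (hP : IsCompact P)
    (hconv : Convex ℝ P) (hfin : (extremePoints ℝ P).Finite) :
    4 * (edges P).ncard ≤ (extremePoints ℝ P).ncard ^ 2 := by
  have hsub := edges_subset_singleton_of_collinear hcol
  rcases (edges P).eq_empty_or_nonempty with h | ⟨F, hF⟩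
  · simp [h]
  have hedges : (edges P).ncard ≤ 1 := (ncard_le_ncard hsub).trans_eq (ncard_singleton P)
  have hvertices : 1 < (extremePoints ℝ P).ncard := one_lt_ncard_iff_nontrivial_and_finite.2
    ⟨(nontrivial_inter_extremePoints_of_mem_edges hP hconv hF).mono inter_subset_right, hfin⟩
  nlinarith

open scoped Classical in
theorem two_mul_ncard_edges_add_card_midpoint_mem_interior_le (hP : IsCompact P)
    (hconv : Convex ℝ P) (hPedges : P ∉ edges P) {V : Finset E} (hV : extremePoints ℝ P ⊆ V) :
    2 * (edges P).ncard + #{p ∈ V ×ˢ V | midpoint ℝ p.1 p.2 ∈ interior P} ≤ #V ^ 2 := by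
  have hle : 2 * (edges P).ncard ≤ #{p ∈ V ×ˢ V | midpoint ℝ p.1 p.2 ∉ interior P} := by
    refine two_mul_ncard_le_card_of_pairwise_inter_subsingleton
      pairwise_edges_inter_subsingleton fun F hF ↦ ?_
    obtain ⟨u, ⟨huF, hu⟩, w, ⟨hwF, hw⟩, huw⟩ :=
      nontrivial_inter_extremePoints_of_mem_edges hP hconv hF
    have hmid : midpoint ℝ u w ∉ interior P := disjoint_left.1
      (disjoint_interior_of_isExposed_of_ne hF.1 (ne_of_mem_of_not_mem hF hPedges))
      ((hF.1.convex hconv).midpoint_mem huF hwF)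
    refine ⟨u, huF, w, hwF, huw, ?_, ?_⟩
    · exact Finset.mem_filter.2 ⟨Finset.mk_mem_product (hV hu) (hV hw), hmid⟩
    · exact Finset.mem_filter.2
        ⟨Finset.mk_mem_product (hV hw) (hV hu), midpoint_comm (R := ℝ) u w ▸ hmid⟩
  have hsplit := Finset.card_filter_add_card_filter_not (s := V ×ˢ V)
    fun p ↦ midpoint ℝ p.1 p.2 ∈ interior P
  rw [Finset.card_product, ← sq] at hsplit
  lia

end Edges

theorem stmt_4_general {E : Type*} [NormedAddCommGroup E] [NormedSpace ℝ E]
    [FiniteDimensional ℝ E] {P : Set E} (hP : IsCompact P) (hconv : Convex ℝ P)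
    (hfin : (extremePoints ℝ P).Finite) (hneg : -P = P) (hdim : affineSpan ℝ P = ⊤) :
    ((edges P).ncard : ℝ) ≤
      ((extremePoints ℝ P).ncard : ℝ) ^ 2 / 2 * (1 - (2 : ℝ) ^ (-(finrank ℝ E : ℤ))) := by
  classical
  have hspan : vectorSpan ℝ P = ⊤ := by
    rw [← direction_affineSpan, hdim, AffineSubspace.direction_top]
  by_cases hd : finrank ℝ E = 1
  · have hcol : Collinear ℝ P := collinear_iff_finrank_le_one.2 (by rw [hspan, finrank_top, hd])
    have hbound : (4 * (edges P).ncard : ℝ) ≤ (extremePoints ℝ P).ncard ^ 2 := mod_cast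
      four_mul_ncard_edges_le_of_collinear hcol hP hconv hfin
    rw [hd]
    norm_num
    linarith
  have hPedges : P ∉ edges P := fun h ↦ hd (by rw [← h.2.2, hspan, finrank_top])
  have hint : (interior P).Nonempty := hconv.interior_nonempty_iff_affineSpan_eq_top.2 hdim
  set M : ℕ := #{p ∈ hfin.toFinset ×ˢ hfin.toFinset | midpoint ℝ p.1 p.2 ∈ interior P}
  have hM : ((extremePoints ℝ P).ncard ^ 2 : ℝ) ≤ 2 ^ finrank ℝ E * M := by
    rw [ncard_eq_toFinset_card _ hfin]
    exact_mod_cast sq_card_le_two_pow_mul_card_midpoint_mem_interior hconv hP.isBounded hneg hint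
      (fun u hu ↦ (hfin.mem_toFinset.1 hu).1) fun u hu ↦ by
        rwa [hfin.mem_toFinset, ← mem_neg, neg_extremePoints, hneg, ← hfin.mem_toFinset]
  have hedges : (2 * (edges P).ncard + M : ℝ) ≤ (extremePoints ℝ P).ncard ^ 2 := by
    rw [ncard_eq_toFinset_card _ hfin]
    exact_mod_cast two_mul_ncard_edges_add_card_midpoint_mem_interior_le hP hconv hPedges
      hfin.coe_toFinset.ge
  rw [← div_le_iff₀' (by positivity)] at hM
  rw [zpow_neg, zpow_natCast]
  linear_combination hedges / 2 + hM / 2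

/-- Proposition 2.1: a cs `d`-polytope with `n` vertices has at most
`(n²/2)(1 - 2^{-d})` edges. -/
theorem stmt_4 (d n : ℕ) (P : Set (EuclideanSpace ℝ (Fin d)))
    (hP : IsCSPolytope P) (hdim : affineSpan ℝ P = ⊤)
    (hn : (Set.extremePoints ℝ P).ncard = n) :
    (faceCount P 1 : ℝ) ≤ (n : ℝ) ^ 2 / 2 * (1 - (2 : ℝ) ^ (-(d : ℤ))) := by
  obtain ⟨⟨V, rfl⟩, hneg⟩ := hP
  simpa [← hn, faceCount, edges] using stmt_4_general (V.finite_toSet.isCompact_convexHull (𝕜 := ℝ))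
    (convex_convexHull ℝ _) (V.finite_toSet.subset extremePoints_convexHull_subset) hneg.symm hdim
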